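/- arXiv:1912.10709 — 2 statements merged into one kernel-verified Lean document; each statement's English description precedes it below -/
import Mathlib

section
/- Let n ≥ 2, λ > 0, and let ξ ~ N(ν, λ²I_n) be an n-dimensional Gaussian random vector with mean ν = (‖ν‖, 0, 0, …, 0)ᵀ. Then the covariance matrix of ξ/‖ξ‖ is the diagonal matrix cov(ξ/‖ξ‖) = blockdiag( f_n(‖ν‖/λ), g_n(‖ν‖/λ)·I_{n−1} ). -/
open MeasureTheory ProbabilityTheory Matrix

noncomputable section

def euclNorm {n : ℕ} (x : Fin n → ℝ) : ℝ := Real.sqrt (∑ i, x i ^ 2)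

def centerMat (n : ℕ) : Matrix (Fin n) (Fin n) ℝ :=
  1 - (n : ℝ)⁻¹ • Matrix.of (fun _ _ => (1 : ℝ))

def chi {n : ℕ} (z : Fin n → ℝ) : Fin n → ℝ :=
  (euclNorm ((centerMat n).mulVec z))⁻¹ • (centerMat n).mulVec z

def meanVec {Ω : Type*} [MeasurableSpace Ω] (P : Measure Ω) {n : ℕ}
    (X : Ω → Fin n → ℝ) : Fin n → ℝ := fun i => ∫ ω, X ω i ∂P

def covMatrix {Ω : Type*} [MeasurableSpace Ω] (P : Measure Ω) {n : ℕ}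
    (X : Ω → Fin n → ℝ) : Matrix (Fin n) (Fin n) ℝ :=
  Matrix.of fun i j => ∫ ω, (X ω i - meanVec P X i) * (X ω j - meanVec P X j) ∂P

def MRL {Ω : Type*} [MeasurableSpace Ω] (P : Measure Ω) {n : ℕ}
    (X : Ω → Fin n → ℝ) : ℝ := euclNorm (meanVec P X)

def MD {Ω : Type*} [MeasurableSpace Ω] (P : Measure Ω) {n : ℕ}
    (X : Ω → Fin n → ℝ) : Fin n → ℝ := (euclNorm (meanVec P X))⁻¹ • meanVec P X

def stdGaussianPi (n : ℕ) : Measure (Fin n → ℝ) :=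
  Measure.pi fun _ => gaussianReal 0 1

def IsGaussianVec {Ω : Type*} [MeasurableSpace Ω] (P : Measure Ω) {n : ℕ}
    (Z : Ω → Fin n → ℝ) (m : Fin n → ℝ) (S : Matrix (Fin n) (Fin n) ℝ) : Prop :=
  ∃ A : Matrix (Fin n) (Fin n) ℝ, A * Aᵀ = S ∧
    Measure.map Z P = Measure.map (fun x => m + A.mulVec x) (stdGaussianPi n)

def ascFact (a : ℝ) (k : ℕ) : ℝ := ∏ i ∈ Finset.range k, (a + i)

def kummerM (a b z : ℝ) : ℝ := ∑' k : ℕ, (ascFact a k / ascFact b k) * z ^ k / (Nat.factorial k)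

def varrho (m : ℕ) (x : ℝ) : ℝ :=
  (Real.Gamma (((m : ℝ) + 1) / 2) / (Real.sqrt 2 * Real.Gamma (((m : ℝ) + 2) / 2))) * x *
    kummerM (1 / 2) (((m : ℝ) + 2) / 2) (-x ^ 2 / 2)

def fFun (m : ℕ) (x : ℝ) : ℝ :=
  1 - (((m : ℝ) - 1) / m) * kummerM 1 ((m : ℝ) / 2 + 1) (-x ^ 2 / 2) - (varrho m x) ^ 2

def gFun (m : ℕ) (x : ℝ) : ℝ :=
  (1 / (m : ℝ)) * kummerM 1 ((m : ℝ) / 2 + 1) (-x ^ 2 / 2)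

def Vmat (n : ℕ) : Matrix (Fin n) (Fin n) ℝ :=
  Matrix.of fun i j =>
    if (j : ℕ) = n - 1 then 1 / Real.sqrt n
    else if (i : ℕ) = (j : ℕ) then
      ((n : ℝ) - 1 - (j : ℕ)) / Real.sqrt (((n : ℝ) - 1 - (j : ℕ)) * ((n : ℝ) - (j : ℕ)))
    else if (j : ℕ) < (i : ℕ) then
      -(1 / Real.sqrt (((n : ℝ) - 1 - (j : ℕ)) * ((n : ℝ) - (j : ℕ))))
    else 0

def projMat (n : ℕ) : Matrix (Fin n) (Fin n) ℝ :=
  Matrix.diagonal fun i => if (i : ℕ) < n - 1 then 1 else 0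

def embedZero {n : ℕ} (v : Fin (n - 1) → ℝ) : Fin n → ℝ :=
  fun i => if h : (i : ℕ) < n - 1 then v ⟨i, h⟩ else 0

def Ximat (n : ℕ) (r : ℝ) : Matrix (Fin n) (Fin n) ℝ :=
  Matrix.of fun i j => if i = j then 1 else r

def stdNormCDF (x : ℝ) : ℝ := (gaussianReal 0 1 (Set.Iic x)).toReal

def thetaTilde : Fin 2 → ℝ := ![Real.sqrt 2 / 2, -(Real.sqrt 2 / 2)]

lemma ascFact_pos {a : ℝ} (ha : 0 < a) (k : ℕ) : 0 < ascFact a k :=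
  Finset.prod_pos fun i _ => by positivity

lemma Gamma_add_ascFact {a : ℝ} (ha : 0 < a) (k : ℕ) :
    Real.Gamma (a + k) = ascFact a k * Real.Gamma a := by
  induction k with
  | zero => simp [ascFact]
  | succ k ih =>
    have h : a + (k + 1 : ℕ) = (a + k) + 1 := by push_cast; ring
    rw [h, Real.Gamma_add_one (by positivity), ih]
    simp only [ascFact, Finset.prod_range_succ]
    ring

lemma beta_integral {α β : ℝ} (hα : 0 < α) (hβ : 0 < β) :
    ∫ s in Set.Ioo (0:ℝ) 1, s ^ (α - 1) * (1 - s) ^ (β - 1) =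
      Real.Gamma α * Real.Gamma β / Real.Gamma (α + β) := by
  change _ = ProbabilityTheory.beta α β
  rw [ProbabilityTheory.beta_eq_betaIntegralReal α β hα hβ,
      Complex.betaIntegral, intervalIntegral.integral_of_le (by norm_num),
      ← integral_Ioc_eq_integral_Ioo, ← RCLike.re_to_complex, ← integral_re]
  · refine setIntegral_congr_fun measurableSet_Ioc fun x ⟨hx1, hx₂⟩ ↦ ?_
    norm_cast
    rw [← Complex.ofReal_cpow, ← Complex.ofReal_cpow, RCLike.re_to_complex,
      Complex.re_mul_ofReal, Complex.ofReal_re]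
    all_goals linarith
  convert! Complex.betaIntegral_convergent (u := α) (v := β) (by simpa) (by simpa)
  rw [intervalIntegrable_iff_integrableOn_Ioc_of_le (by simp), IntegrableOn]

lemma beta_integrable {α β : ℝ} (hα : 0 < α) (hβ : 0 < β) :
    IntegrableOn (fun s : ℝ => s ^ (α - 1) * (1 - s) ^ (β - 1)) (Set.Ioo (0:ℝ) 1) := by
  by_contra h
  have h1 := beta_integral hα hβ
  rw [integral_undef h] at h1
  have := Real.Gamma_pos_of_pos hα
  have := Real.Gamma_pos_of_pos hβ
  have := Real.Gamma_pos_of_pos (add_pos hα hβ)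
  have : 0 < Real.Gamma α * Real.Gamma β / Real.Gamma (α + β) := by positivity
  linarith

lemma kummer_integral {a b : ℝ} (ha : 0 < a) (hab : a < b) (z : ℝ) :
    ∫ s in Set.Ioo (0:ℝ) 1, s ^ (a - 1) * (1 - s) ^ (b - a - 1) * Real.exp (z * s) =
      Real.Gamma a * Real.Gamma (b - a) / Real.Gamma b * kummerM a b z := by
  have hβ : 0 < b - a := by linarith
  have hb : 0 < b := by linarith
  have key : HasSum (fun k : ℕ => ∫ s in Set.Ioo (0:ℝ) 1,
        s ^ (a - 1) * (1 - s) ^ (b - a - 1) * ((z * s) ^ k / (Nat.factorial k)))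
      (∫ s in Set.Ioo (0:ℝ) 1, s ^ (a - 1) * (1 - s) ^ (b - a - 1) * Real.exp (z * s)) := by
    have hexp : ∀ y : ℝ, HasSum (fun k : ℕ => y ^ k / (Nat.factorial k)) (Real.exp y) := by
      intro y
      rw [Real.exp_eq_exp_ℝ]
      exact NormedSpace.expSeries_div_hasSum_exp y
    apply hasSum_integral_of_dominated_convergence
      (bound := fun (k : ℕ) s => s ^ (a - 1) * (1 - s) ^ (b - a - 1) *
        (|z| ^ k / (Nat.factorial k)))
    · intro k
      exact Measurable.aestronglyMeasurable (by fun_prop)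
    · intro k
      refine ae_restrict_of_forall_mem measurableSet_Ioo fun s hs => ?_
      have h0 : 0 ≤ s ^ (a - 1) * (1 - s) ^ (b - a - 1) :=
        mul_nonneg (Real.rpow_nonneg hs.1.le _) (Real.rpow_nonneg (by linarith [hs.2]) _)
      rw [norm_mul, Real.norm_of_nonneg h0]
      apply mul_le_mul_of_nonneg_left _ h0
      rw [norm_div, norm_pow, Real.norm_eq_abs, Real.norm_eq_abs, abs_mul, Nat.abs_cast,
        abs_of_pos hs.1]
      have := mul_nonneg (abs_nonneg z) hs.1.le
      gcongr
      exact mul_le_of_le_one_right (abs_nonneg _) hs.2.le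
    · filter_upwards with s
      exact (hexp |z|).summable.mul_left _
    · simp_rw [tsum_mul_left]
      exact (beta_integrable ha hβ).mul_const _
    · filter_upwards with s
      exact (hexp (z * s)).mul_left _
  rw [← key.tsum_eq, kummerM, ← tsum_mul_left]
  congr 1
  ext k
  have h1 : ∫ s in Set.Ioo (0:ℝ) 1,
        s ^ (a - 1) * (1 - s) ^ (b - a - 1) * ((z * s) ^ k / (Nat.factorial k)) =
      (z ^ k / (Nat.factorial k)) * ∫ s in Set.Ioo (0:ℝ) 1,
        s ^ ((a + k) - 1) * (1 - s) ^ ((b - a) - 1) := by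
    rw [← integral_const_mul]
    refine setIntegral_congr_fun measurableSet_Ioo fun s hs => ?_
    have : s ^ ((a + k) - 1) = s ^ (a - 1) * s ^ k := by
      rw [show a + k - 1 = (a - 1) + k by ring, Real.rpow_add hs.1, Real.rpow_natCast]
    simp only [this, mul_pow]
    ring
  rw [h1, beta_integral (by positivity) hβ, show a + k + (b - a) = b + k by ring,
    Gamma_add_ascFact ha, Gamma_add_ascFact hb]
  have := Real.Gamma_pos_of_pos hb
  have := ascFact_pos hb k
  have := ascFact_pos ha k
  field_simp

lemma kummer_integral_Ioi {a b : ℝ} (ha : 0 < a) (hab : a < b) (x : ℝ) :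
    ∫ t in Set.Ioi (0:ℝ), t ^ (a - 1) * ((1 + 2 * t) ^ (-b) *
        Real.exp (-(x ^ 2 * t / (1 + 2 * t)))) =
      2 ^ (-a) * (Real.Gamma a * Real.Gamma (b - a) / Real.Gamma b *
        kummerM a b (-x ^ 2 / 2)) := by
  have himg : (fun s : ℝ => s / (2 * (1 - s))) '' Set.Ioo (0:ℝ) 1 = Set.Ioi 0 := by
    ext t
    simp only [Set.mem_image, Set.mem_Ioo, Set.mem_Ioi]
    constructor
    · rintro ⟨s, ⟨h0, h1⟩, rfl⟩
      have : 0 < 1 - s := by linarith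
      positivity
    · intro ht
      refine ⟨2 * t / (1 + 2 * t), ⟨by positivity, ?_⟩, ?_⟩
      · rw [div_lt_one (by positivity)]; linarith
      · have : 1 - 2 * t / (1 + 2 * t) = 1 / (1 + 2 * t) := by field_simp; ring
        rw [this]; field_simp
  have hder : ∀ s ∈ Set.Ioo (0:ℝ) 1, HasDerivWithinAt (fun s : ℝ => s / (2 * (1 - s)))
      (1 / (2 * (1 - s) ^ 2)) (Set.Ioo 0 1) s := by
    intro s hs
    have h1 : 1 - s ≠ 0 := by linarith [hs.2]
    have h := (hasDerivAt_id s).div (((hasDerivAt_id s).const_sub 1).const_mul 2)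
      (by simpa using h1)
    refine (h.congr_deriv ?_).hasDerivWithinAt
    simp only [id]
    field_simp
    ring
  have hinj : Set.InjOn (fun s : ℝ => s / (2 * (1 - s))) (Set.Ioo 0 1) := by
    intro s hs t ht h
    have h1 : 1 - s ≠ 0 := by linarith [hs.2]
    have h2 : 1 - t ≠ 0 := by linarith [ht.2]
    simp only at h
    field_simp at h
    linarith
  rw [← himg, integral_image_eq_integral_abs_deriv_smul measurableSet_Ioo hder hinj,
    ← kummer_integral ha hab, ← integral_const_mul]
  refine setIntegral_congr_fun measurableSet_Ioo fun s hs => ?_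
  have h1 : 0 < 1 - s := by linarith [hs.2]
  have h0 := hs.1
  have e1 : 1 + 2 * (s / (2 * (1 - s))) = (1 - s)⁻¹ := by field_simp; ring
  simp only [e1, smul_eq_mul]
  rw [abs_of_pos (by positivity), Real.div_rpow h0.le (by positivity),
    Real.mul_rpow (by norm_num) h1.le, Real.inv_rpow h1.le, Real.rpow_neg h1.le, inv_inv]
  have e2 : -(x ^ 2 * (s / (2 * (1 - s))) / (1 - s)⁻¹) = -x ^ 2 / 2 * s := by field_simp
  have e3 : (1 - s) ^ (b - a - 1) = (1 - s) ^ b / ((1 - s) ^ (a - 1) * (1 - s) ^ 2) := by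
    rw [eq_div_iff (by positivity), ← Real.rpow_natCast (1 - s) 2, ← Real.rpow_add h1,
      ← Real.rpow_add h1]
    congr 1; push_cast; ring
  have e4 : (2:ℝ) ^ (-a) = 1 / (2 * 2 ^ (a - 1)) := by
    rw [eq_div_iff (by positivity)]
    nth_rewrite 2 [← Real.rpow_one 2]
    rw [← Real.rpow_add (by norm_num), ← Real.rpow_add (by norm_num)]
    norm_num
  rw [e2, e3, e4]
  field_simp

lemma laplace_swap {n : ℕ} (μ : Measure (Fin n → ℝ)) [IsProbabilityMeasure μ]
    (φ q : (Fin n → ℝ) → ℝ) (hφ : Measurable φ) (hqm : Measurable q) {a : ℝ} (ha : 0 < a)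
    (hq : ∀ᵐ w ∂μ, 0 < q w) (hb : ∀ᵐ w ∂μ, |φ w| ≤ (q w) ^ a) :
    ∫ w, φ w * (1 / q w) ^ a ∂μ =
      (Real.Gamma a)⁻¹ * ∫ t in Set.Ioi (0:ℝ), t ^ (a - 1) *
        ∫ w, φ w * Real.exp (-(q w * t)) ∂μ := by
  have hG := Real.Gamma_pos_of_pos ha
  have hint : Integrable (Function.uncurry fun (w : Fin n → ℝ) (t : ℝ) =>
      φ w * (t ^ (a - 1) * Real.exp (-(q w * t)))) (μ.prod (volume.restrict (Set.Ioi 0))) := by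
    rw [integrable_prod_iff (Measurable.aestronglyMeasurable (by fun_prop))]
    constructor
    · filter_upwards [hq] with w hw
      have hI : Integrable (fun t : ℝ => t ^ (a - 1) * Real.exp (-(q w * t)))
          (volume.restrict (Set.Ioi 0)) := by
        by_contra h
        have h1 := Real.integral_rpow_mul_exp_neg_mul_Ioi ha hw
        rw [integral_undef h] at h1
        have : 0 < (1 / q w) ^ a * Real.Gamma a := by positivity
        linarith
      exact hI.const_mul (φ w)
    · have : (fun w => |φ w| * (1 / q w) ^ a * Real.Gamma a) =ᵐ[μ]
          fun w => ∫ t in Set.Ioi (0:ℝ), ‖φ w * (t ^ (a - 1) * Real.exp (-(q w * t)))‖ := by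
        filter_upwards [hq] with w hw
        rw [mul_assoc, ← Real.integral_rpow_mul_exp_neg_mul_Ioi ha hw, ← integral_const_mul]
        refine setIntegral_congr_fun measurableSet_Ioi fun t ht => ?_
        have : 0 ≤ t ^ (a - 1) * Real.exp (-(q w * t)) :=
          mul_nonneg (Real.rpow_nonneg (le_of_lt ht) _) (Real.exp_pos _).le
        change _ = ‖φ w * (t ^ (a - 1) * Real.exp (-(q w * t)))‖
        rw [norm_mul, Real.norm_eq_abs, Real.norm_of_nonneg this]
      refine Integrable.congr ?_ this
      refine Integrable.mono' (integrable_const (Real.Gamma a))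
        (Measurable.aestronglyMeasurable (by fun_prop)) ?_
      filter_upwards [hq, hb] with w hw hbw
      rw [Real.norm_of_nonneg (by positivity)]
      have : |φ w| * (1 / q w) ^ a ≤ 1 := by
        rw [one_div, Real.inv_rpow hw.le, ← div_eq_mul_inv]
        exact (div_le_one (by positivity)).2 hbw
      nlinarith
  have hswap := integral_integral_swap hint
  have h1 : ∫ w, φ w * (1 / q w) ^ a ∂μ = (Real.Gamma a)⁻¹ *
      ∫ w, (∫ t in Set.Ioi (0:ℝ), φ w * (t ^ (a - 1) * Real.exp (-(q w * t)))) ∂μ := by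
    rw [← integral_const_mul]
    refine integral_congr_ae ?_
    filter_upwards [hq] with w hw
    rw [integral_const_mul, Real.integral_rpow_mul_exp_neg_mul_Ioi ha hw]
    field_simp
  rw [h1, hswap]
  congr 2
  ext t
  rw [← integral_const_mul]
  congr 1
  ext w
  ring

lemma tilt_one (h : ℝ → ℝ) (m : ℝ) {t : ℝ} (ht : 0 ≤ t) :
    ∫ w, h w * Real.exp (-(t * w ^ 2)) ∂(gaussianReal m 1) =
      ((1 + 2 * t) ^ (-(1/2) : ℝ) * Real.exp (-(m ^ 2 * t / (1 + 2 * t)))) *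
        ∫ w, h w ∂(gaussianReal (m / (1 + 2 * t)) (Real.toNNReal (1 + 2 * t)⁻¹)) := by
  have hc : 0 < 1 + 2 * t := by linarith
  have hv : Real.toNNReal (1 + 2 * t)⁻¹ ≠ 0 := by simpa using hc
  rw [integral_gaussianReal_eq_integral_smul one_ne_zero,
    integral_gaussianReal_eq_integral_smul hv, ← integral_const_mul]
  congr 1
  ext w
  simp only [gaussianPDFReal, smul_eq_mul, Real.coe_toNNReal _ (inv_pos.2 hc).le, NNReal.coe_one]
  have e1 : (1 + 2 * t) ^ (-(1/2) : ℝ) = (√(1 + 2 * t))⁻¹ := by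
    rw [Real.rpow_neg hc.le, Real.sqrt_eq_rpow]
  have e2 : √(2 * Real.pi * (1 + 2 * t)⁻¹) = √(2 * Real.pi * 1) * (√(1 + 2 * t))⁻¹ := by
    rw [Real.sqrt_mul (by positivity), Real.sqrt_inv, mul_one]
  have e3 : Real.exp (-(w - m) ^ 2 / (2 * 1)) * Real.exp (-(t * w ^ 2)) =
      Real.exp (-(m ^ 2 * t / (1 + 2 * t))) *
      Real.exp (-(w - m / (1 + 2 * t)) ^ 2 / (2 * (1 + 2 * t)⁻¹)) := by
    rw [← Real.exp_add, ← Real.exp_add]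
    congr 1
    field_simp
    ring
  rw [e1, e2]
  have hs : 0 < √(1 + 2 * t) := Real.sqrt_pos.2 hc
  have hp : 0 < √(2 * Real.pi * 1) := Real.sqrt_pos.2 (by positivity)
  calc _ = (√(2 * Real.pi * 1))⁻¹ * h w *
        (Real.exp (-(w - m) ^ 2 / (2 * 1)) * Real.exp (-(t * w ^ 2))) := by ring
    _ = _ := by rw [e3]; field_simp

lemma tilt_pi {n : ℕ} (m : Fin n → ℝ) (k : Fin n) (h : ℝ → ℝ) {t : ℝ} (ht : 0 ≤ t) :
    ∫ w, h (w k) * Real.exp (-((∑ i, w i ^ 2) * t)) ∂(Measure.pi fun i => gaussianReal (m i) 1) =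
      (1 + 2 * t) ^ (-(n / 2) : ℝ) * Real.exp (-((∑ i, m i ^ 2) * t / (1 + 2 * t))) *
        ∫ w, h w ∂(gaussianReal (m k / (1 + 2 * t)) (Real.toNNReal (1 + 2 * t)⁻¹)) := by
  have hc : 0 < 1 + 2 * t := by linarith
  have h1 : ∀ w : Fin n → ℝ, h (w k) * Real.exp (-((∑ i, w i ^ 2) * t)) =
      ∏ i, (if i = k then h (w i) else 1) * Real.exp (-(t * w i ^ 2)) := by
    intro w
    rw [Finset.prod_mul_distrib, ← Real.exp_sum]
    congr 1
    · simp
    · rw [Finset.sum_neg_distrib, ← Finset.mul_sum, mul_comm]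
  simp_rw [h1]
  rw [integral_fintype_prod_eq_prod
    (f := fun i (y : ℝ) => (if i = k then h y else 1) * Real.exp (-(t * y ^ 2)))]
  have h2 : ∀ i, ∫ y, (if i = k then h y else 1) * Real.exp (-(t * y ^ 2)) ∂(gaussianReal (m i) 1) =
      ((1 + 2 * t) ^ (-(1/2) : ℝ) * Real.exp (-(m i ^ 2 * t / (1 + 2 * t)))) *
      (if i = k then
        ∫ w, h w ∂(gaussianReal (m k / (1 + 2 * t)) (Real.toNNReal (1 + 2 * t)⁻¹)) else 1) := by
    intro i
    rw [tilt_one (fun y => if i = k then h y else 1) (m i) ht]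
    congr 1
    split_ifs with hi
    · rw [hi]
    · simp
  simp_rw [h2]
  rw [Finset.prod_mul_distrib, Finset.prod_mul_distrib, ← Real.exp_sum]
  congr 1
  · congr 1
    · rw [Finset.prod_const, Finset.card_univ, Fintype.card_fin, ← Real.rpow_natCast,
        ← Real.rpow_mul hc.le]
      congr 1; ring
    · rw [Finset.sum_neg_distrib, Finset.sum_mul, Finset.sum_div]
  · simp

lemma law_eq {n : ℕ} (ν : Fin n → ℝ) (lam : ℝ) (hlam : 0 < lam) (A : Matrix (Fin n) (Fin n) ℝ)
    (hA : A * Aᵀ = lam ^ 2 • (1 : Matrix (Fin n) (Fin n) ℝ)) :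
    Measure.map (fun x => ν + A.mulVec x) (stdGaussianPi n) =
      Measure.map (fun w => lam • w) (Measure.pi fun i => gaussianReal (ν i / lam) 1) := by
  set O : Matrix (Fin n) (Fin n) ℝ := lam⁻¹ • A with hO
  have hAO : A = lam • O := by rw [hO, smul_smul, mul_inv_cancel₀ hlam.ne', one_smul]
  have hOO : O * Oᵀ = 1 := by
    rw [hO, transpose_smul, smul_mul_smul_comm, hA, smul_smul]
    have : lam⁻¹ * lam⁻¹ * lam ^ 2 = 1 := by field_simp
    rw [this, one_smul]
  have hOO' : Oᵀ * O = 1 := mul_eq_one_comm.1 hOO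
  let L : EuclideanSpace ℝ (Fin n) →ₗᵢ[ℝ] EuclideanSpace ℝ (Fin n) :=
    { toLinearMap := Matrix.toEuclideanLin O
      norm_map' := by
        intro x
        rw [← sq_eq_sq₀ (norm_nonneg _) (norm_nonneg _), EuclideanSpace.real_norm_sq_eq,
          EuclideanSpace.real_norm_sq_eq]
        have : ∀ y : Fin n → ℝ, ∑ i, y i ^ 2 = y ⬝ᵥ y := by
          intro y; simp [dotProduct, sq]
        have h1 := this (O.mulVec x.ofLp)
        have h2 := this x.ofLp
        change ∑ i, (O.mulVec x.ofLp) i ^ 2 = _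
        rw [h1, h2, Matrix.dotProduct_mulVec, Matrix.vecMul_mulVec, hOO']
        simp }
  let E := L.toLinearIsometryEquiv rfl
  have hE : ∀ x : Fin n → ℝ, (E (WithLp.toLp 2 x)).ofLp = O.mulVec x := by
    intro x
    rfl
  have hrot : Measure.map (fun x => O.mulVec x) (stdGaussianPi n) = stdGaussianPi n := by
    have h1 : (fun x : Fin n → ℝ => O.mulVec x) =
        (WithLp.ofLp : EuclideanSpace ℝ (Fin n) → _) ∘ E ∘ WithLp.toLp 2 := by
      ext x i; simp [hE]
    have h2 := map_pi_eq_stdGaussian (ι := Fin n)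
    rw [h1, ← Measure.map_map (by fun_prop) (by fun_prop),
      ← Measure.map_map (by fun_prop) (by fun_prop), stdGaussianPi, h2, stdGaussian_map, ← h2,
      Measure.map_map (by fun_prop) (by fun_prop)]
    exact Measure.map_id
  have hpi : (Measure.pi fun i => gaussianReal (ν i / lam) 1) =
      Measure.map (fun x i => x i + ν i / lam) (stdGaussianPi n) := by
    rw [stdGaussianPi, Measure.pi_map_pi (f := fun i x => x + ν i / lam) (by fun_prop)]
    simp_rw [gaussianReal_map_add_const, zero_add]
  have hmO : Measurable fun x : Fin n → ℝ => O.mulVec x := by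
    have : Continuous fun x : Fin n → ℝ => O.mulVec x := by fun_prop
    exact this.measurable
  have : (fun x => ν + A.mulVec x) =
      (fun w : Fin n → ℝ => lam • w) ∘ (fun x i => x i + ν i / lam) ∘ (fun x => O.mulVec x) := by
    ext x i
    simp only [hAO, Function.comp, Pi.add_apply, Pi.smul_apply, smul_eq_mul, Matrix.smul_mulVec]
    field_simp
    ring
  rw [this, ← Measure.map_map (by fun_prop) (by fun_prop), ← Measure.map_map (by fun_prop) hmO,
    hrot, hpi]

lemma pi_sq_pos {n : ℕ} (hn : 0 < n) (m : Fin n → ℝ) :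
    ∀ᵐ w ∂(Measure.pi fun i => gaussianReal (m i) 1), 0 < ∑ i, w i ^ 2 := by
  have : NullSingletonClass (gaussianReal (m ⟨0, hn⟩) 1) :=
    nullSingletonClass_gaussianReal one_ne_zero
  have h := (measurePreserving_eval (fun i => gaussianReal (m i) 1) (⟨0, hn⟩ : Fin n)
    ).quasiMeasurePreserving.ae
    (p := fun y => y ≠ 0) (by simp [ae_iff])
  filter_upwards [h] with w hw
  exact Finset.sum_pos' (fun i _ => sq_nonneg _) ⟨⟨0, hn⟩, Finset.mem_univ _, by positivity⟩

lemma mean_coord {n : ℕ} (hn : 0 < n) (m : Fin n → ℝ) (x : ℝ) (hx : ∑ i, m i ^ 2 = x ^ 2)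
    (k : Fin n) :
    ∫ w, (euclNorm w)⁻¹ * w k ∂(Measure.pi fun i => gaussianReal (m i) 1) =
      m k * (Real.Gamma (((n : ℝ) + 1) / 2) / (√2 * Real.Gamma (((n : ℝ) + 2) / 2)) *
        kummerM (1 / 2) (((n : ℝ) + 2) / 2) (-x ^ 2 / 2)) := by
  have hq := pi_sq_pos hn m
  have hn' : (0:ℝ) < n := by exact_mod_cast hn
  have h1 := laplace_swap (Measure.pi fun i => gaussianReal (m i) 1) (fun w => w k)
    (fun w => ∑ i, w i ^ 2) (by fun_prop) (by fun_prop) (a := 1 / 2) (by norm_num) hq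
    (by
      filter_upwards with w
      rw [← Real.sqrt_eq_rpow]
      apply Real.abs_le_sqrt
      exact Finset.single_le_sum (f := fun i => w i ^ 2) (fun i _ => sq_nonneg _)
        (Finset.mem_univ k))
  have h2 : ∀ w : Fin n → ℝ, (euclNorm w)⁻¹ * w k = w k * (1 / ∑ i, w i ^ 2) ^ (1 / 2 : ℝ) := by
    intro w
    rw [euclNorm, ← Real.sqrt_eq_rpow, one_div, Real.sqrt_inv, mul_comm]
  simp_rw [h2]
  rw [h1]
  have h3 : ∫ t in Set.Ioi (0:ℝ), t ^ ((1:ℝ) / 2 - 1) * ∫ w, w k * Real.exp (-((∑ i, w i ^ 2) * t))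
        ∂(Measure.pi fun i => gaussianReal (m i) 1) =
      m k * ∫ t in Set.Ioi (0:ℝ), t ^ ((1:ℝ) / 2 - 1) * ((1 + 2 * t) ^ (-(((n:ℝ) + 2) / 2)) *
        Real.exp (-(x ^ 2 * t / (1 + 2 * t)))) := by
    rw [← integral_const_mul]
    refine setIntegral_congr_fun measurableSet_Ioi fun t ht => ?_
    have ht' : (0:ℝ) < t := ht
    have hc : 0 < 1 + 2 * t := by linarith
    rw [tilt_pi m k (fun y => y) ht'.le, integral_id_gaussianReal, hx]
    have : (1 + 2 * t) ^ (-(((n:ℝ) + 2) / 2)) = (1 + 2 * t) ^ (-((n:ℝ) / 2)) / (1 + 2 * t) := by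
      rw [← Real.rpow_sub_one hc.ne']; congr 1; ring
    rw [this]
    field_simp
  rw [h3, kummer_integral_Ioi (by norm_num) (by linarith),
    show ((n:ℝ) + 2) / 2 - 1 / 2 = (n + 1) / 2 by ring]
  have hG : 0 < Real.Gamma (1 / 2) := Real.Gamma_pos_of_pos (by norm_num)
  have hG2 : 0 < Real.Gamma (((n:ℝ) + 2) / 2) := Real.Gamma_pos_of_pos (by positivity)
  have : (2:ℝ) ^ (-(1/2) : ℝ) = (√2)⁻¹ := by
    rw [Real.rpow_neg (by norm_num), Real.sqrt_eq_rpow]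
  rw [this]
  field_simp

lemma second_coord {n : ℕ} (hn : 0 < n) (m : Fin n → ℝ) (x : ℝ) (hx : ∑ i, m i ^ 2 = x ^ 2)
    (k : Fin n) (hk : m k = 0) :
    ∫ w, ((euclNorm w)⁻¹ * w k) * ((euclNorm w)⁻¹ * w k)
      ∂(Measure.pi fun i => gaussianReal (m i) 1) = gFun n x := by
  have hq := pi_sq_pos hn m
  have hn' : (0:ℝ) < n := by exact_mod_cast hn
  have h1 := laplace_swap (Measure.pi fun i => gaussianReal (m i) 1) (fun w => w k ^ 2)
    (fun w => ∑ i, w i ^ 2) (by fun_prop) (by fun_prop) (a := 1) (by norm_num) hq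
    (by
      filter_upwards with w
      rw [Real.rpow_one, abs_of_nonneg (sq_nonneg _)]
      exact Finset.single_le_sum (f := fun i => w i ^ 2) (fun i _ => sq_nonneg _)
        (Finset.mem_univ k))
  have h2 : ∀ w : Fin n → ℝ, ((euclNorm w)⁻¹ * w k) * ((euclNorm w)⁻¹ * w k) =
      w k ^ 2 * (1 / ∑ i, w i ^ 2) ^ (1 : ℝ) := by
    intro w
    have : (euclNorm w) ^ 2 = ∑ i, w i ^ 2 :=
      Real.sq_sqrt (Finset.sum_nonneg fun i _ => sq_nonneg _)
    rw [← this, Real.rpow_one, one_div, ← inv_pow]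
    ring
  simp_rw [h2]
  rw [h1]
  have h3 : ∫ t in Set.Ioi (0:ℝ), t ^ ((1:ℝ) - 1) * ∫ w, w k ^ 2 * Real.exp (-((∑ i, w i ^ 2) * t))
        ∂(Measure.pi fun i => gaussianReal (m i) 1) =
      ∫ t in Set.Ioi (0:ℝ), t ^ ((1:ℝ) - 1) * ((1 + 2 * t) ^ (-((n:ℝ) / 2 + 1)) *
        Real.exp (-(x ^ 2 * t / (1 + 2 * t)))) := by
    refine setIntegral_congr_fun measurableSet_Ioi fun t ht => ?_
    have ht' : (0:ℝ) < t := ht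
    have hc : 0 < 1 + 2 * t := by linarith
    rw [tilt_pi m k (fun y => y ^ 2) ht'.le, hx, hk, zero_div]
    have hv := variance_of_integral_eq_zero (X := fun y : ℝ => y)
      (μ := gaussianReal 0 (Real.toNNReal (1 + 2 * t)⁻¹)) (by fun_prop)
      (integral_id_gaussianReal)
    rw [variance_fun_id_gaussianReal, Real.coe_toNNReal _ (inv_pos.2 hc).le] at hv
    rw [← hv]
    have : (1 + 2 * t) ^ (-((n:ℝ) / 2 + 1)) = (1 + 2 * t) ^ (-((n:ℝ) / 2)) / (1 + 2 * t) := by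
      rw [← Real.rpow_sub_one hc.ne']; congr 1; ring
    rw [this]
    field_simp
  rw [h3, kummer_integral_Ioi (by norm_num) (by linarith),
    show (n:ℝ) / 2 + 1 - 1 = n / 2 by ring, Real.Gamma_add_one (by positivity), gFun]
  have hG2 : 0 < Real.Gamma ((n:ℝ) / 2) := Real.Gamma_pos_of_pos (by positivity)
  rw [Real.Gamma_one, Real.rpow_neg_one]
  field_simp

lemma cross_coord {n : ℕ} (m : Fin n → ℝ) (i j : Fin n) (hij : i ≠ j) (hj : m j = 0) :
    ∫ w, ((euclNorm w)⁻¹ * w i) * ((euclNorm w)⁻¹ * w j)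
      ∂(Measure.pi fun i => gaussianReal (m i) 1) = 0 := by
  set μ := Measure.pi fun i => gaussianReal (m i) 1 with hμ
  let T : (Fin n → ℝ) → (Fin n → ℝ) := fun w l => if l = j then -(w l) else w l
  have hT : MeasurePreserving T μ μ := by
    refine measurePreserving_pi (f := fun l y => if l = j then -y else y) _ _ ?_
    intro l
    by_cases hl : l = j
    · subst hl
      simp only [if_true]
      refine ⟨measurable_neg, ?_⟩
      have := gaussianReal_map_neg (μ := m l) (v := 1)
      rw [hj, neg_zero] at this
      rw [hj]; exact this
    · simp only [hl, if_false]
      exact MeasurePreserving.id _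
  have hm : Measurable fun w : Fin n → ℝ =>
      ((euclNorm w)⁻¹ * w i) * ((euclNorm w)⁻¹ * w j) := by
    unfold euclNorm; fun_prop
  have h1 : ∫ w, ((euclNorm w)⁻¹ * w i) * ((euclNorm w)⁻¹ * w j) ∂μ =
      ∫ w, ((euclNorm (T w))⁻¹ * T w i) * ((euclNorm (T w))⁻¹ * T w j) ∂μ := by
    conv_lhs => rw [← hT.map_eq]
    rw [integral_map hT.measurable.aemeasurable hm.aestronglyMeasurable]
  have h2 : ∀ w, ((euclNorm (T w))⁻¹ * T w i) * ((euclNorm (T w))⁻¹ * T w j) =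
      -(((euclNorm w)⁻¹ * w i) * ((euclNorm w)⁻¹ * w j)) := by
    intro w
    have : euclNorm (T w) = euclNorm w := by
      unfold euclNorm
      congr 1
      refine Finset.sum_congr rfl fun l _ => ?_
      simp only [T]
      split_ifs <;> ring
    rw [this]
    simp [T, hij]
  simp_rw [h2, integral_neg] at h1
  linarith

lemma unit_abs_le {n : ℕ} (w : Fin n → ℝ) (i : Fin n) : ‖(euclNorm w)⁻¹ * w i‖ ≤ 1 := by
  rw [norm_mul, norm_inv, Real.norm_eq_abs, Real.norm_eq_abs, euclNorm,
    abs_of_nonneg (Real.sqrt_nonneg _), ← div_eq_inv_mul]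
  apply div_le_one_of_le₀ _ (Real.sqrt_nonneg _)
  apply Real.abs_le_sqrt
  exact Finset.single_le_sum (f := fun i => w i ^ 2) (fun i _ => sq_nonneg _) (Finset.mem_univ i)


/-- covariance matrix of the projected homoscedastic normal. -/
theorem stmt12 {Ω : Type*} [MeasurableSpace Ω] (P : Measure Ω) [IsProbabilityMeasure P]
    {n : ℕ} (hn : 2 ≤ n) (lam : ℝ) (hlam : 0 < lam) (ν : Fin n → ℝ)
    (hν : ν = fun i => if i = ⟨0, by omega⟩ then euclNorm ν else 0)
    (ξ : Ω → Fin n → ℝ)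
    (hgauss : IsGaussianVec P ξ ν (lam ^ 2 • (1 : Matrix (Fin n) (Fin n) ℝ))) :
    covMatrix P (fun ω => (euclNorm (ξ ω))⁻¹ • ξ ω) =
      Matrix.diagonal (fun i =>
        if i = (⟨0, by omega⟩ : Fin n) then fFun n (euclNorm ν / lam)
        else gFun n (euclNorm ν / lam)) := by
  obtain ⟨A, hA, hlaw⟩ := hgauss
  rw [law_eq ν lam hlam A hA] at hlaw
  have hn0 : 0 < n := by omega
  set x := euclNorm ν / lam with hxdef
  set m : Fin n → ℝ := fun i => ν i / lam with hm
  set μ := Measure.pi fun i => gaussianReal (m i) 1 with hμ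
  have hξ : AEMeasurable ξ P := by
    by_contra h
    rw [Measure.map_of_not_aemeasurable h] at hlaw
    have : IsProbabilityMeasure (Measure.map (fun w : Fin n → ℝ => lam • w) μ) :=
      Measure.isProbabilityMeasure_map (by fun_prop)
    exact this.ne_zero _ hlaw.symm
  have htr : ∀ G : (Fin n → ℝ) → ℝ, Measurable G →
      ∫ ω, G ((euclNorm (ξ ω))⁻¹ • ξ ω) ∂P = ∫ w, G ((euclNorm w)⁻¹ • w) ∂μ := by
    intro G hG
    have hmeas : Measurable fun w : Fin n → ℝ => G ((euclNorm w)⁻¹ • w) := by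
      apply hG.comp
      unfold euclNorm; fun_prop
    rw [← integral_map (f := fun w : Fin n → ℝ => G ((euclNorm w)⁻¹ • w)) hξ
      hmeas.aestronglyMeasurable, hlaw,
      integral_map (by fun_prop) hmeas.aestronglyMeasurable]
    congr 1
    ext w
    congr 1
    have : euclNorm (lam • w) = lam * euclNorm w := by
      unfold euclNorm
      simp only [Pi.smul_apply, smul_eq_mul, mul_pow]
      rw [← Finset.mul_sum, Real.sqrt_mul (sq_nonneg _), Real.sqrt_sq hlam.le]
    rw [this, smul_smul, mul_inv, mul_comm lam⁻¹, mul_assoc, inv_mul_cancel₀ hlam.ne', mul_one]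
  have hm0 : ∀ i : Fin n, i ≠ ⟨0, hn0⟩ → m i = 0 := by
    intro i hi
    rw [hm]
    simp only
    rw [hν]
    simp [hi]
  have hmz : m ⟨0, hn0⟩ = x := by
    rw [hm, hxdef]
    simp only
    congr 1
    conv_lhs => rw [hν]
    simp
  have hx : ∑ i, m i ^ 2 = x ^ 2 := by
    rw [Finset.sum_eq_single ⟨0, hn0⟩ (fun i _ hi => by rw [hm0 i hi]; ring) (by simp), hmz]
  have hmean : ∀ i, meanVec P (fun ω => (euclNorm (ξ ω))⁻¹ • ξ ω) i =
      ∫ w, (euclNorm w)⁻¹ * w i ∂μ := by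
    intro i
    exact htr (fun v => v i) (measurable_pi_apply i)
  have hint : ∀ i, Integrable (fun w : Fin n → ℝ => (euclNorm w)⁻¹ * w i) μ := by
    intro i
    refine Integrable.mono' (integrable_const (1:ℝ)) ?_ (ae_of_all _ fun w => unit_abs_le w i)
    exact Measurable.aestronglyMeasurable (by unfold euclNorm; fun_prop)
  have hint2 : ∀ i j, Integrable
      (fun w : Fin n → ℝ => ((euclNorm w)⁻¹ * w i) * ((euclNorm w)⁻¹ * w j)) μ := by
    intro i j
    refine Integrable.mono' (integrable_const (1:ℝ)) ?_ (ae_of_all _ fun w => ?_)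
    · exact Measurable.aestronglyMeasurable (by unfold euclNorm; fun_prop)
    · rw [norm_mul]
      exact mul_le_one₀ (unit_abs_le w i) (norm_nonneg _) (unit_abs_le w j)
  have hcov : ∀ i j, covMatrix P (fun ω => (euclNorm (ξ ω))⁻¹ • ξ ω) i j =
      ∫ w, ((euclNorm w)⁻¹ * w i) * ((euclNorm w)⁻¹ * w j) ∂μ -
        (∫ w, (euclNorm w)⁻¹ * w i ∂μ) * ∫ w, (euclNorm w)⁻¹ * w j ∂μ := by
    intro i j
    have h1 := htr (fun v => (v i - ∫ w, (euclNorm w)⁻¹ * w i ∂μ) *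
      (v j - ∫ w, (euclNorm w)⁻¹ * w j ∂μ)) (by fun_prop)
    simp only [covMatrix, Matrix.of_apply, hmean]
    rw [h1]
    simp only [Pi.smul_apply, smul_eq_mul]
    set a := ∫ w, (euclNorm w)⁻¹ * w i ∂μ with ha
    set b := ∫ w, (euclNorm w)⁻¹ * w j ∂μ with hb
    have h2 : ∀ w : Fin n → ℝ, ((euclNorm w)⁻¹ * w i - a) * ((euclNorm w)⁻¹ * w j - b) =
        ((euclNorm w)⁻¹ * w i) * ((euclNorm w)⁻¹ * w j) -
          (b * ((euclNorm w)⁻¹ * w i) + a * ((euclNorm w)⁻¹ * w j) - a * b) := by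
      intro w; ring
    simp_rw [h2]
    have hi1 : Integrable (fun w : Fin n → ℝ => b * ((euclNorm w)⁻¹ * w i)) μ :=
      (hint i).const_mul b
    have hi2 : Integrable (fun w : Fin n → ℝ => a * ((euclNorm w)⁻¹ * w j)) μ :=
      (hint j).const_mul a
    have hi3 : Integrable (fun w : Fin n → ℝ =>
        b * ((euclNorm w)⁻¹ * w i) + a * ((euclNorm w)⁻¹ * w j)) μ := hi1.add hi2
    have hi4 : Integrable (fun w : Fin n → ℝ =>
        b * ((euclNorm w)⁻¹ * w i) + a * ((euclNorm w)⁻¹ * w j) - a * b) μ :=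
      hi3.sub (integrable_const _)
    rw [integral_sub (hint2 i j) hi4, integral_sub hi3 (integrable_const _),
      integral_add hi1 hi2, integral_const_mul, integral_const_mul, ← ha, ← hb]
    simp
    ring
  have hmu := mean_coord hn0 m x hx
  rw [← hμ] at hmu
  have hmu0 : ∀ i : Fin n, i ≠ ⟨0, hn0⟩ → ∫ w, (euclNorm w)⁻¹ * w i ∂μ = 0 := by
    intro i hi
    rw [hmu, hm0 i hi, zero_mul]
  have hsec : ∀ i : Fin n, i ≠ ⟨0, hn0⟩ →
      ∫ w, ((euclNorm w)⁻¹ * w i) * ((euclNorm w)⁻¹ * w i) ∂μ = gFun n x := by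
    intro i hi
    exact second_coord hn0 m x hx i (hm0 i hi)
  ext i j
  rw [hcov]
  by_cases hij : i = j
  · subst hij
    rw [Matrix.diagonal_apply_eq]
    by_cases hi : i = ⟨0, hn0⟩
    · rw [if_pos hi]
      subst hi
      have hsum : ∑ i, ∫ w, ((euclNorm w)⁻¹ * w i) * ((euclNorm w)⁻¹ * w i) ∂μ = 1 := by
        rw [← integral_finsetSum _ (fun i _ => hint2 i i)]
        have : (fun w : Fin n → ℝ => ∑ i, ((euclNorm w)⁻¹ * w i) * ((euclNorm w)⁻¹ * w i))
            =ᵐ[μ] fun _ => (1:ℝ) := by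
          filter_upwards [pi_sq_pos hn0 m] with w hw
          have h1 : (euclNorm w) ^ 2 = ∑ i, w i ^ 2 := Real.sq_sqrt hw.le
          have h2 : ∀ i, ((euclNorm w)⁻¹ * w i) * ((euclNorm w)⁻¹ * w i) =
            ((euclNorm w) ^ 2)⁻¹ * w i ^ 2 := by
            intro i; rw [← inv_pow]; ring
          simp_rw [h2]
          rw [← Finset.mul_sum, h1, inv_mul_cancel₀ hw.ne']
        rw [integral_congr_ae this]
        simp
      rw [← Finset.add_sum_erase _ _ (Finset.mem_univ (⟨0, hn0⟩ : Fin n)),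
        Finset.sum_congr rfl (fun i hi => hsec i (Finset.ne_of_mem_erase hi)),
        Finset.sum_const, Finset.card_erase_of_mem (Finset.mem_univ _), Finset.card_univ,
        Fintype.card_fin, nsmul_eq_mul, Nat.cast_sub (by omega), Nat.cast_one] at hsum
      rw [eq_sub_of_add_eq hsum, hmu, hmz, fFun, varrho, gFun]
      ring
    · rw [if_neg hi, hsec i hi, hmu0 i hi]
      ring
  · rw [Matrix.diagonal_apply_ne _ hij]
    by_cases hj : j = ⟨0, hn0⟩
    · have hi : i ≠ ⟨0, hn0⟩ := fun h => hij (h.trans hj.symm)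
      have := cross_coord m j i (Ne.symm hij) (hm0 i hi)
      rw [hmu0 i hi, zero_mul, sub_zero, ← this]
      congr 1
      ext w
      ring
    · rw [hmu0 j hj, hμ, cross_coord m i j hij (hm0 j hj)]
      ring
end
end

section
/- Let n ≥ 2, λ > 0, and let ξ ~ N(ν, λ²I_n) be an n-dimensional Gaussian random vector with mean ν = (‖ν‖, 0, 0, …, 0)ᵀ. Then E[ξ₁²/‖ξ‖²] = 1 − ((n−1)/n)·M(1, n/2 + 1, −‖ν‖²/(2λ²)). -/
open MeasureTheory ProbabilityTheory Matrix

noncomputable section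

section

open scoped NNReal

lemma gauss_weight (m t : ℝ) (w : ℝ≥0) (hw : w ≠ 0) (ht : 0 < t) (f : ℝ → ℝ) :
    ∫ x, f x * Real.exp (-t * x ^ 2) ∂(gaussianReal m w) =
      (√(1 + 2 * t * w))⁻¹ * Real.exp (-t * m ^ 2 / (1 + 2 * t * w)) *
       ∫ x, f x ∂(gaussianReal (m / (1 + 2 * t * w)) (w / (1 + 2 * t.toNNReal * w))) := by
  have hw' : (0 : ℝ) < w := by positivity
  have hD : (0 : ℝ) < 1 + 2 * t * w := by positivity
  have hc : ((w / (1 + 2 * t.toNNReal * w) : ℝ≥0) : ℝ) = w / (1 + 2 * t * w) := by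
    simp [ht.le]
  have hv : w / (1 + 2 * t.toNNReal * w) ≠ 0 := by
    intro h
    rw [h] at hc
    have : (0 : ℝ) < w / (1 + 2 * t * w) := by positivity
    rw [← hc] at this
    simp at this
  rw [integral_gaussianReal_eq_integral_smul hw, integral_gaussianReal_eq_integral_smul hv,
    ← integral_const_mul]
  congr 1
  ext x
  simp only [gaussianPDFReal_def, smul_eq_mul, hc]
  have e1 : √(2 * Real.pi * w) = √(1 + 2 * t * w) * √(2 * Real.pi * (w / (1 + 2 * t * w))) := by
    rw [← Real.sqrt_mul hD.le]
    congr 1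
    field_simp
  have e2 : Real.exp (-(x - m) ^ 2 / (2 * w)) * Real.exp (-t * x ^ 2) =
      Real.exp (-t * m ^ 2 / (1 + 2 * t * w)) *
      Real.exp (-(x - m / (1 + 2 * t * w)) ^ 2 / (2 * (w / (1 + 2 * t * w)))) := by
    rw [← Real.exp_add, ← Real.exp_add]
    congr 1
    field_simp
    ring
  rw [e1, mul_inv]
  linear_combination (√(1 + 2 * t * w))⁻¹ * (√(2 * Real.pi * (w / (1 + 2 * t * w))))⁻¹ * f x * e2

lemma gauss_sq (w : ℝ≥0) : ∫ x, x ^ 2 ∂(gaussianReal 0 w) = w := by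
  have h := variance_fun_id_gaussianReal (μ := 0) (v := w)
  rw [variance_eq_integral (by fun_prop)] at h
  simpa using h

lemma gauss_one (m t : ℝ) (w : ℝ≥0) (hw : w ≠ 0) (ht : 0 < t) :
    ∫ x, Real.exp (-t * x ^ 2) ∂(gaussianReal m w) =
      (√(1 + 2 * t * w))⁻¹ * Real.exp (-t * m ^ 2 / (1 + 2 * t * w)) := by
  simpa using gauss_weight m t w hw ht (fun _ => 1)

lemma gauss_two (t : ℝ) (w : ℝ≥0) (hw : w ≠ 0) (ht : 0 < t) :
    ∫ x, x ^ 2 * Real.exp (-t * x ^ 2) ∂(gaussianReal 0 w) =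
      (√(1 + 2 * t * w))⁻¹ * (w / (1 + 2 * t * w)) := by
  rw [gauss_weight 0 t w hw ht (fun x => x ^ 2)]
  simp [gauss_sq, ht.le]

lemma pi_int {n : ℕ} (ν : Fin n → ℝ) (i : Fin n) (hi : ν i = 0) (t : ℝ) (w : ℝ≥0) (hw : w ≠ 0)
    (ht : 0 < t) :
    ∫ x, x i ^ 2 * Real.exp (-t * ∑ j, x j ^ 2) ∂(Measure.pi fun j => gaussianReal (ν j) w) =
      (√(1 + 2 * t * w))⁻¹ ^ n * Real.exp (-t * (∑ j, ν j ^ 2) / (1 + 2 * t * w)) *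
        (w / (1 + 2 * t * w)) := by
  have h1 : ∀ x : Fin n → ℝ, x i ^ 2 * Real.exp (-t * ∑ j, x j ^ 2) =
      ∏ j, ((if j = i then (x j) ^ 2 else 1) * Real.exp (-t * x j ^ 2)) := by
    intro x
    rw [Finset.prod_mul_distrib, Finset.mul_sum, Real.exp_sum]
    simp
  simp_rw [h1]
  rw [integral_fintype_prod_eq_prod (𝕜 := ℝ)
    (f := fun j (y : ℝ) => ((if j = i then y ^ 2 else 1) * Real.exp (-t * y ^ 2)))]
  have h2 : ∀ j, ∫ y, ((if j = i then y ^ 2 else 1) * Real.exp (-t * y ^ 2))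
      ∂(gaussianReal (ν j) w) = (√(1 + 2 * t * w))⁻¹ *
        Real.exp (-t * ν j ^ 2 / (1 + 2 * t * w)) *
        (if j = i then (w / (1 + 2 * t * w)) else 1) := by
    intro j
    by_cases h : j = i
    · subst h
      simp only [if_true, hi]
      rw [gauss_two t w hw ht]
      simp
    · simp only [h, if_false, one_mul, mul_one]
      exact gauss_one _ t w hw ht
  simp_rw [h2]
  rw [Finset.prod_mul_distrib, Finset.prod_mul_distrib, ← Real.exp_sum]
  rw [Finset.mul_sum, Finset.sum_div]
  simp

lemma laplace (a r : ℝ) (h : 0 < r) :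
    ∫ t in Set.Ioi (0 : ℝ), a * Real.exp (-t * r) = a / r := by
  rw [integral_const_mul]
  have := integral_exp_mul_Ioi (a := -r) (by linarith) 0
  simp only [mul_zero, Real.exp_zero] at this
  have h2 : ∀ t, -t * r = -r * t := fun t => by ring
  simp_rw [h2, this]
  field_simp

lemma laplace_int (a r : ℝ) (h : 0 < r) :
    IntegrableOn (fun t => a * Real.exp (-t * r)) (Set.Ioi (0 : ℝ)) := by
  have := integrableOn_exp_mul_Ioi (a := -r) (by linarith) 0
  have h2 : ∀ t, -t * r = -r * t := fun t => by ring
  simp_rw [h2]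
  exact this.const_mul a

lemma sq_le_sum {n : ℕ} (x : Fin n → ℝ) (i : Fin n) : x i ^ 2 ≤ ∑ j, x j ^ 2 :=
  Finset.single_le_sum (f := fun j => x j ^ 2) (fun _ _ => sq_nonneg _) (Finset.mem_univ i)

lemma laplace' {n : ℕ} (x : Fin n → ℝ) (i : Fin n) :
    IntegrableOn (fun t => x i ^ 2 * Real.exp (-t * ∑ j, x j ^ 2)) (Set.Ioi (0 : ℝ)) ∧
    ∫ t in Set.Ioi (0 : ℝ), x i ^ 2 * Real.exp (-t * ∑ j, x j ^ 2) = x i ^ 2 / ∑ j, x j ^ 2 := by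
  have h0 : 0 ≤ ∑ j, x j ^ 2 := Finset.sum_nonneg fun j _ => sq_nonneg _
  rcases h0.eq_or_lt with h | h
  · have := sq_le_sum x i
    rw [← h] at this
    have : x i ^ 2 = 0 := le_antisymm this (sq_nonneg _)
    simp [this]
  · exact ⟨laplace_int _ _ h, laplace _ _ h⟩

lemma ratio_meas {n : ℕ} (i : Fin n) :
    Measurable (fun x : Fin n → ℝ => x i ^ 2 / ∑ j, x j ^ 2) := by fun_prop

lemma ratio_integrable {n : ℕ} (μ : Measure (Fin n → ℝ)) [IsProbabilityMeasure μ] (i : Fin n) :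
    Integrable (fun x => x i ^ 2 / ∑ j, x j ^ 2) μ := by
  refine Integrable.of_bound (ratio_meas i).aestronglyMeasurable 1 (Filter.Eventually.of_forall ?_)
  intro x
  have h0 : 0 ≤ ∑ j, x j ^ 2 := Finset.sum_nonneg fun j _ => sq_nonneg _
  rw [Real.norm_of_nonneg (by positivity)]
  exact div_le_one_of_le₀ (sq_le_sum x i) h0

lemma swap_int {n : ℕ} (μ : Measure (Fin n → ℝ)) [IsProbabilityMeasure μ] (i : Fin n) :
    ∫ x, x i ^ 2 / ∑ j, x j ^ 2 ∂μ =
      ∫ t in Set.Ioi (0 : ℝ), ∫ x, x i ^ 2 * Real.exp (-t * ∑ j, x j ^ 2) ∂μ := by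
  have : ∀ x : Fin n → ℝ, x i ^ 2 / ∑ j, x j ^ 2 =
    ∫ t in Set.Ioi (0 : ℝ), x i ^ 2 * Real.exp (-t * ∑ j, x j ^ 2) := fun x => (laplace' x i).2.symm
  simp_rw [this]
  apply integral_integral_swap
  rw [integrable_prod_iff]
  · refine ⟨Filter.Eventually.of_forall fun x => (laplace' x i).1, ?_⟩
    have h : ∀ x : Fin n → ℝ, ∀ t : ℝ, ‖x i ^ 2 * Real.exp (-t * ∑ j, x j ^ 2)‖ =
      x i ^ 2 * Real.exp (-t * ∑ j, x j ^ 2) := fun x t => Real.norm_of_nonneg (by positivity)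
    simp only [Function.uncurry_apply_pair, h, ← this]
    exact ratio_integrable μ i
  · apply Measurable.aestronglyMeasurable
    unfold Function.uncurry
    fun_prop

lemma subst_int (n : ℕ) (S w : ℝ) (hw : 0 < w) :
    ∫ t in Set.Ioi (0 : ℝ), (√(1 + 2 * t * w))⁻¹ ^ n * Real.exp (-t * S / (1 + 2 * t * w)) *
        (w / (1 + 2 * t * w)) =
    1 / 2 * ∫ u in Set.Ioo (0 : ℝ) 1, (1 - u) ^ ((n : ℝ) / 2 - 1) * Real.exp (-S / (2 * w) * u) := by
  have him : Set.image (fun u : ℝ => u / (2 * w * (1 - u))) (Set.Ioo 0 1) = Set.Ioi 0 := by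
    ext t
    constructor
    · rintro ⟨u, ⟨h0, h1⟩, rfl⟩
      have : 0 < 1 - u := by linarith
      simp only [Set.mem_Ioi]
      positivity
    · intro ht
      have ht : 0 < t := ht
      have hD : 0 < 1 + 2 * w * t := by positivity
      refine ⟨2 * w * t / (1 + 2 * w * t), ⟨by positivity, ?_⟩, ?_⟩
      · rw [div_lt_one hD]; linarith
      · have : 1 - 2 * w * t / (1 + 2 * w * t) = 1 / (1 + 2 * w * t) := by field_simp; ring
        simp only [this]
        field_simp
  have hinj : Set.InjOn (fun u : ℝ => u / (2 * w * (1 - u))) (Set.Ioo 0 1) := by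
    intro u hu v hv h
    have h1 : 0 < 1 - u := by linarith [hu.2]
    have h2 : 0 < 1 - v := by linarith [hv.2]
    simp only at h
    rw [div_eq_div_iff (by positivity) (by positivity)] at h
    have : 2 * w * (u - v) = 0 := by linarith
    have : u - v = 0 := by
      rcases mul_eq_zero.mp this with h | h
      · linarith
      · exact h
    linarith
  have hder : ∀ u ∈ Set.Ioo (0:ℝ) 1, HasDerivWithinAt (fun u : ℝ => u / (2 * w * (1 - u)))
      (1 / (2 * w * (1 - u) ^ 2)) (Set.Ioo 0 1) u := by
    intro u hu
    have h1 : 0 < 1 - u := by linarith [hu.2]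
    have h2 : HasDerivAt (fun y : ℝ => 2 * w * (1 - y)) (2 * w * (-1)) u :=
      ((hasDerivAt_id' u).const_sub 1).const_mul (2 * w)
    have h3 := (hasDerivAt_id' u).fun_div h2 (by positivity)
    refine (h3.congr_deriv ?_).hasDerivWithinAt
    field_simp
    ring
  rw [← him, integral_image_eq_integral_abs_deriv_smul measurableSet_Ioo hder hinj,
    ← integral_const_mul]
  refine setIntegral_congr_fun measurableSet_Ioo ?_
  intro u hu
  have h1 : 0 < 1 - u := by linarith [hu.2]
  have hD : 1 + 2 * (u / (2 * w * (1 - u))) * w = (1 - u)⁻¹ := by field_simp; ring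
  simp only [hD, smul_eq_mul]
  rw [abs_of_pos (by positivity), Real.sqrt_inv, inv_inv, Real.rpow_sub h1, Real.rpow_one]
  have h3 : √(1 - u) ^ n = (1 - u) ^ ((n : ℝ) / 2) := by
    rw [Real.sqrt_eq_rpow, ← Real.rpow_natCast, ← Real.rpow_mul h1.le]
    congr 1; ring
  rw [h3]
  have h4 : -(u / (2 * w * (1 - u))) * S / (1 - u)⁻¹ = -S / (2 * w) * u := by field_simp
  rw [h4]
  field_simp


lemma ascFact_Gamma (b : ℝ) (hb : 0 < b) (k : ℕ) :
    Real.Gamma (b + k) = Real.Gamma b * ascFact b k := by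
  induction k with
  | zero => simp [ascFact]
  | succ k ih =>
    have : b + ((k + 1 : ℕ) : ℝ) = (b + k) + 1 := by push_cast; ring
    rw [this, Real.Gamma_add_one (by positivity), ih]
    simp only [ascFact, Finset.prod_range_succ]
    ring

lemma ascFact_one (k : ℕ) : ascFact 1 k = (Nat.factorial k : ℝ) := by
  have := ascFact_Gamma 1 one_pos k
  rw [add_comm, Real.Gamma_nat_eq_factorial] at this
  simpa using this.symm

lemma beta_moment (a : ℝ) (ha : 0 < a) (k : ℕ) :
    ∫ u in Set.Ioo (0 : ℝ) 1, (1 - u) ^ (a - 1) * u ^ k =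
      (Nat.factorial k : ℝ) / (a * ascFact (a + 1) k) := by
  have h := beta_eq_betaIntegralReal (k + 1) a (by positivity) ha
  have h2 : Complex.betaIntegral ((k + 1 : ℝ) : ℂ) a =
      ((∫ u in Set.Ioo (0 : ℝ) 1, (1 - u) ^ (a - 1) * u ^ k : ℝ) : ℂ) := by
    rw [Complex.betaIntegral, intervalIntegral.integral_of_le zero_le_one,
      integral_Ioc_eq_integral_Ioo, ← integral_complex_ofReal]
    refine setIntegral_congr_fun measurableSet_Ioo ?_
    intro u hu
    have h1 : 0 ≤ 1 - u := by linarith [hu.2]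
    simp only
    push_cast
    rw [Complex.ofReal_cpow h1]
    push_cast
    simp
    ring
  rw [h2, Complex.ofReal_re] at h
  rw [← h, beta, Real.Gamma_nat_eq_factorial]
  have h3 : (k : ℝ) + 1 + a = (a + 1) + k := by ring
  rw [h3, ascFact_Gamma _ (by positivity), Real.Gamma_add_one ha.ne']
  have := (Real.Gamma_pos_of_pos ha).ne'
  field_simp

lemma kummer_int (a z : ℝ) (ha : 1 ≤ a) :
    ∫ u in Set.Ioo (0 : ℝ) 1, (1 - u) ^ (a - 1) * Real.exp (z * u) =
      1 / a * kummerM 1 (a + 1) z := by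
  have ha0 : 0 < a := by linarith
  have hcont : ∀ (y : ℝ) (k : ℕ), Continuous fun u : ℝ =>
      (1 - u) ^ (a - 1) * u ^ k * (y ^ k / (Nat.factorial k : ℝ)) := by
    intro y k
    have : Continuous fun u : ℝ => (1 - u) ^ (a - 1) :=
      Continuous.rpow_const (by fun_prop) (fun _ => Or.inr (by linarith))
    fun_prop
  have hint : ∀ (y : ℝ) (k : ℕ), IntegrableOn (fun u : ℝ =>
      (1 - u) ^ (a - 1) * u ^ k * (y ^ k / (Nat.factorial k : ℝ))) (Set.Ioo 0 1) := fun y k =>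
    ((hcont y k).integrableOn_Icc (a := 0) (b := 1)).mono_set Set.Ioo_subset_Icc_self
  have hsum := hasSum_integral_of_summable_integral_norm (hint z) ?_
  · have h1 : ∀ u : ℝ, ∑' k : ℕ, (1 - u) ^ (a - 1) * u ^ k * (z ^ k / (Nat.factorial k : ℝ)) =
        (1 - u) ^ (a - 1) * Real.exp (z * u) := by
      intro u
      rw [Real.exp_eq_exp_ℝ, NormedSpace.exp_eq_tsum_div, ← tsum_mul_left]
      congr 1; ext k
      rw [mul_pow]; ring
    simp_rw [h1] at hsum
    rw [← hsum.tsum_eq, kummerM, ← tsum_mul_left]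
    congr 1; ext k
    rw [integral_mul_const, beta_moment a ha0, ascFact_one]
    have : (Nat.factorial k : ℝ) ≠ 0 := by positivity
    field_simp
  · refine Summable.of_nonneg_of_le (fun k => integral_nonneg fun _ => norm_nonneg _) ?_
      (Real.summable_pow_div_factorial |z|)
    intro k
    have hb : ∀ u ∈ Set.Ioo (0 : ℝ) 1,
      ‖‖(1 - u) ^ (a - 1) * u ^ k * (z ^ k / (Nat.factorial k : ℝ))‖‖ ≤
        |z| ^ k / (Nat.factorial k : ℝ) := by
      intro u hu
      have h1 : 0 ≤ 1 - u := by linarith [hu.2]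
      rw [norm_norm, norm_mul, norm_mul, norm_div, norm_pow, norm_pow, Real.norm_natCast,
        Real.norm_of_nonneg (Real.rpow_nonneg h1 _), Real.norm_of_nonneg hu.1.le, Real.norm_eq_abs]
      have h2 : (1 - u) ^ (a - 1) ≤ 1 := Real.rpow_le_one h1 (by linarith [hu.1]) (by linarith)
      have h3 : u ^ k ≤ 1 := pow_le_one₀ hu.1.le hu.2.le
      have h4 : (1 - u) ^ (a - 1) * u ^ k ≤ 1 := mul_le_one₀ h2 (pow_nonneg hu.1.le _) h3
      exact mul_le_of_le_one_left (by positivity) h4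
    have := norm_setIntegral_le_of_norm_le_const (μ := volume) (s := Set.Ioo (0:ℝ) 1) (by simp) hb
    refine (le_abs_self _).trans ?_
    simpa using this

lemma gauss_law {n : ℕ} (A : Matrix (Fin n) (Fin n) ℝ) (w : ℝ≥0)
    (hA : A * Aᵀ = (w : ℝ) • (1 : Matrix (Fin n) (Fin n) ℝ)) (ν : Fin n → ℝ) :
    Measure.map (fun x => ν + A.mulVec x) (stdGaussianPi n) =
      Measure.pi fun j => gaussianReal (ν j) w := by
  have hm : Measurable (fun x : Fin n → ℝ => ν + A.mulVec x) := by
    have : Continuous (fun x : Fin n → ℝ => ν + A.mulVec x) := by fun_prop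
    exact this.measurable
  have : IsProbabilityMeasure (stdGaussianPi n) := by unfold stdGaussianPi; infer_instance
  have : IsProbabilityMeasure (Measure.map (fun x => ν + A.mulVec x) (stdGaussianPi n)) :=
    Measure.isProbabilityMeasure_map hm.aemeasurable
  apply (MeasurableEquiv.toLp 2 (Fin n → ℝ)).map_measurableEquiv_injective
  rw [MeasurableEquiv.coe_toLp]
  have : IsProbabilityMeasure (Measure.map (WithLp.toLp 2) (Measure.map (fun x => ν + A.mulVec x) (stdGaussianPi n))) :=
    Measure.isProbabilityMeasure_map (by fun_prop)
  have : IsProbabilityMeasure (Measure.map (WithLp.toLp 2) (Measure.pi fun j => gaussianReal (ν j) w)) :=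
    Measure.isProbabilityMeasure_map (by fun_prop)
  apply Measure.ext_of_charFun (E := EuclideanSpace ℝ (Fin n))
  ext t
  rw [charFun_pi]
  simp_rw [charFun_gaussianReal]
  rw [charFun_apply, integral_map (by fun_prop) (by fun_prop), integral_map (by fun_prop) (by fun_prop)]
  have h1 : ∀ x : Fin n → ℝ, inner ℝ (WithLp.toLp 2 (ν + A.mulVec x)) t =
      (∑ j, ν j * t j) + ∑ j, x j * (Aᵀ.mulVec t.ofLp) j := by
    intro x
    have e : inner ℝ (WithLp.toLp 2 (ν + A.mulVec x)) t = (ν + A.mulVec x) ⬝ᵥ t.ofLp := by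
      simp [PiLp.inner_apply, dotProduct, mul_comm]
    rw [e, add_dotProduct, mulVec_transpose, dotProduct_comm (A.mulVec x), dotProduct_mulVec,
      dotProduct_comm _ x]
    rfl
  simp_rw [h1]
  push_cast
  simp_rw [add_mul, Complex.exp_add, Finset.sum_mul, Complex.exp_sum]
  rw [integral_const_mul, stdGaussianPi, integral_fintype_prod_eq_prod (𝕜 := ℂ)
    (f := fun j (y : ℝ) => Complex.exp ((y : ℂ) * (((Aᵀ.mulVec t.ofLp) j : ℝ) : ℂ) * Complex.I))]
  have h2 : ∀ s : ℝ, ∫ y : ℝ, Complex.exp ((y : ℂ) * (s : ℂ) * Complex.I) ∂(gaussianReal 0 1) =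
      Complex.exp (-(s : ℂ) ^ 2 / 2) := by
    intro s
    have := charFun_gaussianReal (μ := 0) (v := 1) s
    rw [charFun_apply_real] at this
    simp only [mul_comm (s : ℂ)] at this
    rw [this]
    congr 1
    simp
    ring
  simp_rw [h2]
  rw [← Complex.exp_sum, ← Complex.exp_sum, ← Complex.exp_sum, ← Complex.exp_add]
  congr 1
  have h3 : ∑ j, (Aᵀ.mulVec t.ofLp) j ^ 2 = w * ∑ j, t j ^ 2 := by
    have e : (Aᵀ.mulVec t.ofLp) ⬝ᵥ (Aᵀ.mulVec t.ofLp) = w * (t.ofLp ⬝ᵥ t.ofLp) := by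
      rw [dotProduct_mulVec, vecMul_transpose, mulVec_mulVec, hA, smul_mulVec, one_mulVec,
        smul_dotProduct, smul_eq_mul]
    simpa [dotProduct, sq] using e
  have h4 : ∑ j, (((Aᵀ.mulVec t.ofLp) j : ℝ) : ℂ) ^ 2 = (w : ℂ) * ∑ j, (t j : ℂ) ^ 2 := by
    exact_mod_cast h3
  rw [Finset.sum_sub_distrib, ← Finset.sum_div, ← Finset.sum_div, Finset.sum_neg_distrib, h4,
    Finset.mul_sum, sub_eq_add_neg, neg_div]
  congr 1
  exact Finset.sum_congr rfl fun j _ => by ring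

lemma ratio_val {n : ℕ} (hn : 2 ≤ n) (ν : Fin n → ℝ) (w : ℝ≥0) (hw : w ≠ 0) (i : Fin n)
    (hi : ν i = 0) :
    ∫ x, x i ^ 2 / ∑ j, x j ^ 2 ∂(Measure.pi fun j => gaussianReal (ν j) w) =
      1 / n * kummerM 1 ((n : ℝ) / 2 + 1) (-(∑ j, ν j ^ 2) / (2 * w)) := by
  have hn' : (2 : ℝ) ≤ n := by exact_mod_cast hn
  rw [swap_int, setIntegral_congr_fun measurableSet_Ioi
    (fun t ht => pi_int ν i hi t w hw ht), subst_int n _ w (by positivity),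
    kummer_int _ _ (by linarith)]
  field_simp

lemma sum_ratio {n : ℕ} (ν : Fin n → ℝ) (w : ℝ≥0) (hw : w ≠ 0) (i₀ : Fin n) :
    ∑ i, ∫ x, x i ^ 2 / ∑ j, x j ^ 2 ∂(Measure.pi fun j => gaussianReal (ν j) w) = 1 := by
  rw [← integral_finsetSum _ (fun i _ => ratio_integrable _ i)]
  have : ∀ᵐ x ∂(Measure.pi fun j => gaussianReal (ν j) w), ∑ i, x i ^ 2 / ∑ j, x j ^ 2 = (1 : ℝ) := by
    have h0 : ∀ᵐ x ∂(Measure.pi fun j => gaussianReal (ν j) w), x i₀ ≠ 0 := by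
      have := nullSingletonClass_gaussianReal (μ := ν i₀) hw
      have h1 : ∀ᵐ y ∂(gaussianReal (ν i₀) w), y ≠ 0 := by simp [ae_iff]
      exact (measurePreserving_eval (fun j => gaussianReal (ν j) w) i₀).quasiMeasurePreserving.ae h1
    filter_upwards [h0] with x hx
    rw [← Finset.sum_div]
    apply div_self
    have := sq_le_sum x i₀
    have : 0 < x i₀ ^ 2 := by positivity
    linarith
  rw [integral_congr_ae this]
  simp

lemma euclNorm_sq {n : ℕ} (x : Fin n → ℝ) : euclNorm x ^ 2 = ∑ i, x i ^ 2 :=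
  Real.sq_sqrt (Finset.sum_nonneg fun _ _ => sq_nonneg _)

end

/-- `E[ξ₁²/‖ξ‖²] = 1 − ((n−1)/n)·M(1, n/2+1, −‖ν‖²/(2λ²))`. -/
theorem stmt13 {Ω : Type*} [MeasurableSpace Ω] (P : Measure Ω) [IsProbabilityMeasure P]
    {n : ℕ} (hn : 2 ≤ n) (lam : ℝ) (hlam : 0 < lam) (ν : Fin n → ℝ)
    (hν : ν = fun i => if i = ⟨0, by omega⟩ then euclNorm ν else 0)
    (ξ : Ω → Fin n → ℝ)
    (hgauss : IsGaussianVec P ξ ν (lam ^ 2 • (1 : Matrix (Fin n) (Fin n) ℝ))) :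
    (∫ ω, (ξ ω ⟨0, by omega⟩) ^ 2 / (euclNorm (ξ ω)) ^ 2 ∂P) =
      1 - (((n : ℝ) - 1) / n) *
        kummerM 1 ((n : ℝ) / 2 + 1) (-(euclNorm ν) ^ 2 / (2 * lam ^ 2)) := by
  obtain ⟨A, hA, hmap⟩ := hgauss
  set i₀ : Fin n := ⟨0, by omega⟩ with hi₀
  obtain ⟨w, hwl⟩ : ∃ w : NNReal, (w : ℝ) = lam ^ 2 := ⟨⟨lam ^ 2, sq_nonneg _⟩, rfl⟩
  have hw : w ≠ 0 := by
    rintro rfl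
    have : 0 < lam ^ 2 := by positivity
    rw [← hwl] at this
    simp at this
  rw [← hwl] at hA
  rw [gauss_law A w hA ν] at hmap
  have hξ : AEMeasurable ξ P := by
    by_contra h
    rw [Measure.map_of_not_aemeasurable h] at hmap
    exact IsProbabilityMeasure.ne_zero _ hmap.symm
  simp_rw [euclNorm_sq]
  have h1 : ∫ ω, ξ ω i₀ ^ 2 / ∑ j, ξ ω j ^ 2 ∂P =
      ∫ x, x i₀ ^ 2 / ∑ j, x j ^ 2 ∂(Measure.pi fun j => gaussianReal (ν j) w) := by
    rw [← hmap, integral_map hξ (ratio_meas i₀).aestronglyMeasurable]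
  rw [h1, ← hwl]
  have hs := sum_ratio ν w hw i₀
  rw [← Finset.add_sum_erase _ _ (Finset.mem_univ i₀)] at hs
  have h2 : ∀ i ∈ Finset.univ.erase i₀,
      ∫ x, x i ^ 2 / ∑ j, x j ^ 2 ∂(Measure.pi fun j => gaussianReal (ν j) w) =
      1 / n * kummerM 1 ((n : ℝ) / 2 + 1) (-(∑ j, ν j ^ 2) / (2 * w)) := by
    intro i hi
    apply ratio_val hn ν w hw i
    have hne : i ≠ i₀ := Finset.ne_of_mem_erase hi
    rw [hν]
    simp [hne]
  rw [Finset.sum_congr rfl h2, Finset.sum_const, Finset.card_erase_of_mem (Finset.mem_univ _),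
    Finset.card_univ, Fintype.card_fin, nsmul_eq_mul, Nat.cast_sub (by omega)] at hs
  push_cast at hs
  linear_combination hs
end
end
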